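/- Consider the bilinear program: maximize f(π,x,λ) = αᵀΦx − πᵀλ over π ∈ Π_R (viewed as vectors in ℝ^{S×A} with π ≥ 0 and ∑_a π(s,a) = 1 for all s), x ∈ ℝ^k, and λ ∈ ℝ^{S×A} with λ ≥ 0 and (1−γ)·λ ≥ AΦx − b componentwise. Then (a) the supremum of f over the feasible set equals sup_{π∈Π_R} ρ̃(π); and (b) assuming the all-ones vector 1 lies in the column span of Φ, if the supremum is attained, it is attained at some feasible (π̄, x̄, λ̄) such that π̄ is deterministic and greedy with respect to Φx̄ and π̄ᵀλ̄ = 0. -/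

import Mathlib

open Matrix BigOperators

namespace DRADP

variable {S A K : Type*} [Fintype S] [Fintype A] [Fintype K] [DecidableEq S] [DecidableEq A]

/-- A randomized policy: nonnegative with rows summing to one. -/
def isPolicy (π : S → A → ℝ) : Prop :=
  (∀ s a, 0 ≤ π s a) ∧ ∀ s, ∑ a, π s a = 1

/-- The randomized policy corresponding to a deterministic policy `p : S → A`. -/
def detPol (p : S → A) : S → A → ℝ := fun s a => if a = p s then 1 else 0

/-- Transition matrix `P_π` of a policy. -/
noncomputable def Pmat (P : S → A → S → ℝ) (π : S → A → ℝ) : Matrix S S ℝ :=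
  Matrix.of fun s s' => ∑ a, P s a s' * π s a

/-- Reward vector `r_π` of a policy. -/
noncomputable def rvec (r : S → A → ℝ) (π : S → A → ℝ) : S → ℝ :=
  fun s => ∑ a, r s a * π s a

/-- State occupancy frequency `d_π = (1-γ)·∑_t γ^t (P_πᵀ)^t α`. -/
noncomputable def dOcc (P : S → A → S → ℝ) (α : S → ℝ) (γ : ℝ) (π : S → A → ℝ) : S → ℝ :=
  fun s => (1 - γ) * ∑' t : ℕ, γ ^ t * (((Pmat P π)ᵀ ^ t) *ᵥ α) s

/-- State-action occupancy frequency `u_π(s,a) = d_π(s)·π(s,a)`. -/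
noncomputable def uOcc (P : S → A → S → ℝ) (α : S → ℝ) (γ : ℝ) (π : S → A → ℝ) : S × A → ℝ :=
  fun w => dOcc P α γ π w.1 * π w.1 w.2

/-- Value function `v_π = ∑_t γ^t P_π^t r_π`. -/
noncomputable def vVal (P : S → A → S → ℝ) (r : S → A → ℝ) (γ : ℝ) (π : S → A → ℝ) : S → ℝ :=
  fun s => ∑' t : ℕ, γ ^ t * ((Pmat P π ^ t) *ᵥ rvec r π) s

/-- The return `ρ(π) = αᵀ v_π`. -/
noncomputable def ret (P : S → A → S → ℝ) (r : S → A → ℝ) (α : S → ℝ) (γ : ℝ)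
    (π : S → A → ℝ) : ℝ :=
  ∑ s, α s * vVal P r γ π s

/-- The matrix `A` with rows `A((s,a),·) = e_sᵀ − γ·P(s,a,·)`. -/
def Amat (P : S → A → S → ℝ) (γ : ℝ) : Matrix (S × A) S ℝ :=
  Matrix.of fun w s' => (if w.1 = s' then (1 : ℝ) else 0) - γ * P w.1 w.2 s'

/-- The vector `b(s,a) = r(s,a)`. -/
def bvec (r : S → A → ℝ) : S × A → ℝ := fun w => r w.1 w.2

/-- `U = {u : u ≥ 0, Aᵀu = (1−γ)·α}`. -/
def Uset (P : S → A → S → ℝ) (α : S → ℝ) (γ : ℝ) : Set (S × A → ℝ) :=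
  {u | (∀ w, 0 ≤ u w) ∧ (Amat P γ)ᵀ *ᵥ u = fun s => (1 - γ) * α s}

/-- The Bellman operator `L`. -/
noncomputable def bell (P : S → A → S → ℝ) (r : S → A → ℝ) (γ : ℝ) (v : S → ℝ) : S → ℝ :=
  fun s => ⨆ a : A, (r s a + γ * ∑ s', P s a s' * v s')

/-- A deterministic policy `p` is greedy w.r.t. `v`. -/
def isGreedy (P : S → A → S → ℝ) (r : S → A → ℝ) (γ : ℝ) (p : S → A) (v : S → ℝ) : Prop :=
  ∀ s a, r s a + γ * ∑ s', P s a s' * v s' ≤ r s (p s) + γ * ∑ s', P s (p s) s' * v s'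

/-- Approximate occupancy frequencies `Ũ(π)`. -/
def Utilde (P : S → A → S → ℝ) (α : S → ℝ) (γ : ℝ) (Φ : Matrix S K ℝ) (π : S → A → ℝ) :
    Set (S × A → ℝ) :=
  {u | (∀ w, 0 ≤ u w) ∧
    (Φᵀ *ᵥ ((Amat P γ)ᵀ *ᵥ u) = fun j => (1 - γ) * (Φᵀ *ᵥ α) j) ∧
    ∀ w, u w ≤ π w.1 w.2}

/-- The distributionally robust return estimate
`ρ̃(π) = sup_{v∈Ṽ} (αᵀv − sup_{u∈Ũ(π)} uᵀ(Av − b)/(1−γ))`. -/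
noncomputable def rhoTilde (P : S → A → S → ℝ) (r : S → A → ℝ) (α : S → ℝ) (γ : ℝ)
    (Φ : Matrix S K ℝ) (π : S → A → ℝ) : ℝ :=
  ⨆ x : K → ℝ, (∑ s, α s * (Φ *ᵥ x) s -
    sSup ((fun u : S × A → ℝ =>
      (∑ w, u w * ((Amat P γ *ᵥ (Φ *ᵥ x)) w - bvec r w)) / (1 - γ)) ''
      Utilde P α γ Φ π))

/-- The set `G` of deterministic policies greedy w.r.t. some representable value function. -/
def greedySet (P : S → A → S → ℝ) (r : S → A → ℝ) (γ : ℝ) (Φ : Matrix S K ℝ) :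
    Set (S → A → ℝ) :=
  {π | ∃ p : S → A, π = detPol p ∧ ∃ x : K → ℝ, isGreedy P r γ p (Φ *ᵥ x)}

end DRADP

open DRADP

/-!
On `Ũ(π)` the quantity `αᵀv - uᵀAv/(1-γ)` vanishes for every representable `v`, so `ρ̃(π)` is the
minimum of `bᵀu/(1-γ)` over `Ũ(π)`. The dual of this linear program is the bilinear program with
the policy held fixed; as `Ũ(π)` sits inside the compact box `0 ≤ u ≤ π`, strong duality follows
from separating a point from the compact image of the box, provided `Ũ(π)` is nonempty, and it
contains the occupancy frequency of `π`. Taking the supremum over `π` gives (a).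

For (b), subtract the penalty `c = πᵀλ` from `Φx`, which is possible as `1` is in the span of `Φ`.
The residual `A(Φx - c) - b` averaged under `π` is then nonpositive in every state, hence so is its
minimum over actions, which is attained by the greedy policy. With `λ̄ = (residual)⁺/(1-γ)` the
greedy policy pays no penalty, and the objective has not decreased.
-/

namespace DRADP

theorem csSup_eq_of_isLUB_iff {X : Type*} [ConditionallyCompleteLinearOrder X] [NoBotOrder X]
    {s t : Set X} (h : ∀ c, IsLUB s c ↔ IsLUB t c) : sSup s = sSup t := by
  have hjunk {u : Set X} (hu : ¬∃ c, IsLUB u c) : sSup u = sSup ∅ := by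
    rcases u.eq_empty_or_nonempty with rfl | hne
    · rfl
    · exact csSup_of_not_bddAbove fun hb => hu ⟨_, isLUB_csSup hne hb⟩
  by_cases hs : ∃ c, IsLUB s c
  · obtain ⟨c, hc⟩ := hs
    have hc' := (h c).1 hc
    rw [hc.csSup_eq hc.nonempty, hc'.csSup_eq hc'.nonempty]
  · exact (hjunk hs).trans (hjunk (by simpa only [h] using hs)).symm

section LagrangianDuality

variable {E F : Type*} [AddCommGroup E] [Module ℝ E] [TopologicalSpace E]
  [AddCommGroup F] [Module ℝ F] [TopologicalSpace F] [IsTopologicalAddGroup F]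
  [ContinuousSMul ℝ F] [LocallyConvexSpace ℝ F] [T2Space F]

theorem exists_forall_lt_lagrangian {C : Set E} (hC : IsCompact C) (hconv : Convex ℝ C)
    (T : E →L[ℝ] F) (c : E →L[ℝ] ℝ) {q : F} {m : ℝ} (hne : ∃ u ∈ C, T u = q)
    (hm : ∀ u ∈ C, T u = q → m < c u) :
    ∃ y : StrongDual ℝ F, ∀ u ∈ C, m < c u + y (q - T u) := by
  have hclosed : IsClosed (T.prod c '' C) := (hC.image (T.prod c).continuous).isClosed
  have hqm : (q, m) ∉ T.prod c '' C := by
    rintro ⟨u, hu, huq⟩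
    obtain ⟨hTu, hcu⟩ := Prod.mk.inj huq
    exact (hm u hu hTu).ne' hcu
  obtain ⟨f, _, hfq, hfC⟩ :=
    geometric_hahn_banach_point_closed (hconv.is_linear_image (T.prod c).isLinear) hclosed hqm
  have hf (z : F) (t : ℝ) : f (z, t) = f (z, 0) + t * f (0, 1) := by
    rw [← smul_eq_mul, ← map_smul, ← map_add]
    simp
  have hsep : ∀ u ∈ C, f (q, 0) + m * f (0, 1) < f (T u, 0) + c u * f (0, 1) := fun u hu => by
    rw [← hf, ← hf]
    exact hfq.trans (hfC _ ⟨u, hu, rfl⟩)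
  -- A feasible point lies above `(q, m)`, so the separating hyperplane is not vertical.
  have hpos : 0 < f (0, 1) := by
    obtain ⟨u, hu, rfl⟩ := hne
    nlinarith [hsep u hu, hm u hu rfl]
  refine ⟨-(f (0, 1))⁻¹ • f.comp (.inl ℝ F ℝ), fun u hu => ?_⟩
  have hdiff : f (q - T u, 0) = f (q, 0) - f (T u, 0) := by
    rw [← map_sub]
    simp
  have hprice : (f (0, 1))⁻¹ * f (q - T u, 0) < c u - m := by
    rw [inv_mul_lt_iff₀ hpos, hdiff]
    linarith [hsep u hu]
  change m < c u + -(f (0, 1))⁻¹ * f (q - T u, 0)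
  linarith

end LagrangianDuality

section BoxLinearProgram

variable {ι K : Type*} [Fintype ι]

/-- Feasible set of the box-constrained linear program "minimize `b ⬝ᵥ u` subject to
`0 ≤ u ≤ β` and `Mᵀ u = q`". -/
def boxPrimal (M : Matrix ι K ℝ) (β : ι → ℝ) (q : K → ℝ) : Set (ι → ℝ) :=
  {u | u ∈ Set.Icc 0 β ∧ Mᵀ *ᵥ u = q}

variable {M : Matrix ι K ℝ} {b β : ι → ℝ} {q : K → ℝ}

theorem isCompact_boxPrimal : IsCompact (boxPrimal M β q) :=
  isCompact_Icc.inter_right (isClosed_eq (by fun_prop) continuous_const)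

theorem exists_isLeast_boxPrimal (b : ι → ℝ) (hne : (boxPrimal M β q).Nonempty) :
    ∃ m, IsLeast ((b ⬝ᵥ ·) '' boxPrimal M β q) m :=
  (isCompact_boxPrimal.image (by simp only [dotProduct]; fun_prop)).exists_isLeast (hne.image _)

variable [Fintype K]

/-- Feasible set of the linear program dual to `boxPrimal`: maximize `q ⬝ᵥ x - β ⬝ᵥ l` over the
pairs `(x, l)` where `x` prices the equality constraints and `l` the upper bounds. -/
def boxDual (M : Matrix ι K ℝ) (b : ι → ℝ) : Set ((K → ℝ) × (ι → ℝ)) :=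
  {z | 0 ≤ z.2 ∧ M *ᵥ z.1 - b ≤ z.2}

theorem dotProduct_residual_of_mem_boxPrimal {u : ι → ℝ} (hu : u ∈ boxPrimal M β q) (x : K → ℝ) :
    u ⬝ᵥ (M *ᵥ x - b) = q ⬝ᵥ x - b ⬝ᵥ u := by
  rw [dotProduct_sub, dotProduct_mulVec, ← mulVec_transpose, hu.2, dotProduct_comm u b]

theorem boxDual_value_le {u : ι → ℝ} (hu : u ∈ boxPrimal M β q) {z : (K → ℝ) × (ι → ℝ)}
    (hz : z ∈ boxDual M b) : q ⬝ᵥ z.1 - β ⬝ᵥ z.2 ≤ b ⬝ᵥ u := by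
  have hweighted := calc
    q ⬝ᵥ z.1 - b ⬝ᵥ u = u ⬝ᵥ (M *ᵥ z.1 - b) := (dotProduct_residual_of_mem_boxPrimal hu _).symm
    _ ≤ u ⬝ᵥ z.2 := dotProduct_le_dotProduct_of_nonneg_left hz.2 hu.1.1
    _ ≤ β ⬝ᵥ z.2 := dotProduct_le_dotProduct_of_nonneg_right hu.1.2 hz.1
  linarith

theorem exists_mem_Icc_dotProduct_eq_posPart (hβ : 0 ≤ β) (g : ι → ℝ) :
    ∃ u ∈ Set.Icc 0 β, u ⬝ᵥ g = β ⬝ᵥ g⁺ := by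
  classical
  refine ⟨fun i => if 0 ≤ g i then β i else 0, ⟨fun i => ?_, fun i => ?_⟩,
    Finset.sum_congr rfl fun i _ => ?_⟩
  · dsimp only
    split_ifs
    exacts [hβ i, le_rfl]
  · dsimp only
    split_ifs
    exacts [le_rfl, hβ i]
  · dsimp only
    split_ifs with hg
    · rw [Pi.posPart_apply, posPart_of_nonneg hg]
    · rw [Pi.posPart_apply, posPart_of_nonpos (not_le.1 hg).le, zero_mul, mul_zero]

theorem exists_mem_boxDual_lt_value (hne : (boxPrimal M β q).Nonempty) {m : ℝ}
    (hm : ∀ u ∈ boxPrimal M β q, m < b ⬝ᵥ u) :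
    ∃ z ∈ boxDual M b, m < q ⬝ᵥ z.1 - β ⬝ᵥ z.2 := by
  classical
  have hβ : 0 ≤ β := hne.elim fun u hu => hu.1.1.trans hu.1.2
  obtain ⟨y, hy⟩ := exists_forall_lt_lagrangian isCompact_Icc (convex_Icc 0 β)
    (Mᵀ.mulVecLin.toContinuousLinearMap)
    ((dotProductEquiv ℝ ι b).toContinuousLinearMap) hne fun u hu hq => hm u ⟨hu, hq⟩
  obtain ⟨x, hx⟩ := (dotProductEquiv ℝ K).surjective y.toLinearMap
  have hyx (v : K → ℝ) : y v = x ⬝ᵥ v := (LinearMap.congr_fun hx v).symm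
  obtain ⟨u, hu, hmax⟩ := exists_mem_Icc_dotProduct_eq_posPart hβ (M *ᵥ x - b)
  refine ⟨(x, (M *ᵥ x - b)⁺), ⟨posPart_nonneg _, le_posPart _⟩, (hy u hu).trans_eq ?_⟩
  calc b ⬝ᵥ u + y (q - Mᵀ *ᵥ u) = q ⬝ᵥ x - u ⬝ᵥ (M *ᵥ x - b) := by
        rw [hyx, dotProduct_sub, dotProduct_sub, dotProduct_comm x q, dotProduct_comm b u,
          mulVec_transpose, dotProduct_comm x, ← dotProduct_mulVec]
        ring
    _ = q ⬝ᵥ x - β ⬝ᵥ (M *ᵥ x - b)⁺ := by rw [hmax]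

theorem isLUB_boxDual_value {m : ℝ} (hm : IsLeast ((b ⬝ᵥ ·) '' boxPrimal M β q) m) :
    IsLUB ((fun z => q ⬝ᵥ z.1 - β ⬝ᵥ z.2) '' boxDual M b) m := by
  obtain ⟨⟨u, hu, rfl⟩, hmin⟩ := hm
  refine ⟨Set.forall_mem_image.2 fun z hz => boxDual_value_le hu hz, fun c hc => ?_⟩
  refine le_of_forall_lt fun m' hm' => ?_
  obtain ⟨z, hz, hlt⟩ := exists_mem_boxDual_lt_value ⟨u, hu⟩ (b := b)
    fun u' hu' => hm'.trans_le (hmin ⟨u', hu', rfl⟩)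
  exact hlt.trans_le (hc ⟨z, hz, rfl⟩)

theorem iSup_sub_sSup_boxPrimal_eq {m : ℝ} (hm : IsLeast ((b ⬝ᵥ ·) '' boxPrimal M β q) m) :
    ⨆ x, (q ⬝ᵥ x - sSup ((fun u => u ⬝ᵥ (M *ᵥ x - b)) '' boxPrimal M β q)) = m := by
  obtain ⟨⟨u, hu, rfl⟩, hmin⟩ := hm
  have hmax (x : K → ℝ) :
      IsGreatest ((fun u => u ⬝ᵥ (M *ᵥ x - b)) '' boxPrimal M β q) (q ⬝ᵥ x - b ⬝ᵥ u) := by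
    refine ⟨⟨u, hu, dotProduct_residual_of_mem_boxPrimal hu x⟩,
      Set.forall_mem_image.2 fun u' hu' => ?_⟩
    rw [dotProduct_residual_of_mem_boxPrimal hu']
    exact sub_le_sub_left (hmin ⟨u', hu', rfl⟩) _
  simp only [(hmax _).csSup_eq, sub_sub_cancel, ciSup_const]

end BoxLinearProgram

section SubstochasticMatrix

variable {S : Type*} [Fintype S] {T : Matrix S S ℝ}

-- The negative part satisfies `d⁻ ≤ d⁻ T`, but `T` strictly decreases the mass of `d⁻ ≠ 0`.
theorem nonneg_of_vecMul_le (hT : ∀ s s', 0 ≤ T s s') (hrow : ∀ s, ∑ s', T s s' < 1)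
    {d : S → ℝ} (hd : d ᵥ* T ≤ d) : 0 ≤ d := by
  have hneg : d⁻ ≤ d⁻ ᵥ* T := by
    refine sup_le ?_ fun s' => dotProduct_nonneg_of_nonneg (negPart_nonneg d) fun s => hT s s'
    calc -d ≤ (-d) ᵥ* T := by rw [neg_vecMul]; exact neg_le_neg hd
      _ ≤ d⁻ ᵥ* T := fun s' =>
        dotProduct_le_dotProduct_of_nonneg_right (neg_le_negPart d) fun s => hT s s'
  have hterm (s : S) : 0 ≤ d⁻ s * (1 - ∑ s', T s s') :=
    mul_nonneg (negPart_nonneg d s) (sub_nonneg.2 (hrow s).le)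
  have hsum : ∑ s, d⁻ s * (1 - ∑ s', T s s') ≤ 0 := by
    have hle : ∑ s, d⁻ s ≤ ∑ s', (d⁻ ᵥ* T) s' := Finset.sum_le_sum fun s' _ => hneg s'
    simp only [vecMul, dotProduct] at hle
    rw [Finset.sum_comm] at hle
    simpa only [mul_sub, mul_one, Finset.sum_sub_distrib, Finset.mul_sum, sub_nonpos] using hle
  have hzero (s : S) : d⁻ s = 0 := by
    have := (Finset.sum_eq_zero_iff_of_nonneg fun s _ => hterm s).1
      (hsum.antisymm (Finset.sum_nonneg fun s _ => hterm s)) s (Finset.mem_univ s)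
    exact (mul_eq_zero.1 this).resolve_right (sub_pos.2 (hrow s)).ne'
  exact negPart_eq_zero.1 (funext hzero)

theorem exists_nonneg_sub_vecMul_eq (hT : ∀ s s', 0 ≤ T s s') (hrow : ∀ s, ∑ s', T s s' < 1)
    {c : S → ℝ} (hc : 0 ≤ c) : ∃ d, 0 ≤ d ∧ d - d ᵥ* T = c := by
  let L : (S → ℝ) →ₗ[ℝ] S → ℝ := LinearMap.id - T.vecMulLinear
  have hinj : Function.Injective L := by
    refine (injective_iff_map_eq_zero L).2 fun d hd => ?_
    have hfix : d = d ᵥ* T := sub_eq_zero.1 hd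
    refine le_antisymm (neg_nonneg.1 ?_) (nonneg_of_vecMul_le hT hrow hfix.ge)
    exact nonneg_of_vecMul_le hT hrow (by rw [neg_vecMul, ← hfix])
  obtain ⟨d, hd⟩ := LinearMap.injective_iff_surjective.1 hinj c
  exact ⟨d, nonneg_of_vecMul_le hT hrow (sub_nonneg.1 (hc.trans_eq hd.symm)), hd⟩

theorem exists_discounted_occupancy {Q : Matrix S S ℝ} (hQ : ∀ s s', 0 ≤ Q s s')
    (hQsum : ∀ s, ∑ s', Q s s' ≤ 1) {α : S → ℝ} (hα : 0 ≤ α) (hαsum : ∑ s, α s ≤ 1)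
    {γ : ℝ} (hγ0 : 0 ≤ γ) (hγ1 : γ < 1) :
    ∃ d ∈ Set.Icc (0 : S → ℝ) 1, d - γ • (d ᵥ* Q) = (1 - γ) • α := by
  obtain ⟨d, hd0, hd⟩ := exists_nonneg_sub_vecMul_eq (T := γ • Q)
    (fun s s' => mul_nonneg hγ0 (hQ s s'))
    (fun s => by
      simp only [Matrix.smul_apply, smul_eq_mul, ← Finset.mul_sum]
      exact (mul_le_of_le_one_right hγ0 (hQsum s)).trans_lt hγ1)
    (smul_nonneg (sub_nonneg.2 hγ1.le) hα)
  rw [vecMul_smul] at hd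
  have hflow : ∑ s', (d ᵥ* Q) s' ≤ ∑ s, d s := by
    simp only [vecMul, dotProduct]
    rw [Finset.sum_comm]
    refine Finset.sum_le_sum fun s _ => ?_
    rw [← Finset.mul_sum]
    exact mul_le_of_le_one_right (hd0 s) (hQsum s)
  have hbalance : ∑ s, d s - γ * ∑ s', (d ᵥ* Q) s' = (1 - γ) * ∑ s, α s := by
    simpa [Finset.mul_sum] using congrArg (fun v => ∑ s, v s) hd
  have hmass : ∑ s, d s ≤ 1 := by nlinarith
  exact ⟨d, ⟨hd0, fun s => (Finset.single_le_sum (fun i _ => hd0 i) (Finset.mem_univ s)).trans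
    hmass⟩, hd⟩

end SubstochasticMatrix

section Policy

variable {S A : Type*}

theorem exists_isGreedy [Fintype S] [Finite A] (hA : S → Nonempty A) (P : S → A → S → ℝ)
    (r : S → A → ℝ) (γ : ℝ) (v : S → ℝ) : ∃ p, isGreedy P r γ p v := by
  have hmax (s : S) : ∃ a₀, ∀ a,
      r s a + γ * ∑ s', P s a s' * v s' ≤ r s a₀ + γ * ∑ s', P s a₀ s' * v s' :=
    have := hA s
    Finite.exists_max fun a => r s a + γ * ∑ s', P s a s' * v s'
  choose p hp using hmax
  exact ⟨p, hp⟩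

variable [Fintype A] {P : S → A → S → ℝ} {π : S → A → ℝ}

theorem isPolicy_detPol [DecidableEq A] (p : S → A) : isPolicy (detPol p) :=
  ⟨fun s a => by unfold detPol; split_ifs <;> norm_num, fun s => by simp [detPol]⟩

theorem isPolicy.nonempty_action (hπ : isPolicy π) (s : S) : Nonempty A := by
  by_contra h
  rw [not_nonempty_iff] at h
  simpa using hπ.2 s

theorem isPolicy.le_sum_mul (hπ : isPolicy π) (s : S) {g : A → ℝ} {c : ℝ} (hc : ∀ a, c ≤ g a) :
    c ≤ ∑ a, π s a * g a := calc
  c = ∑ a, π s a * c := by rw [← Finset.sum_mul, hπ.2, one_mul]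
  _ ≤ ∑ a, π s a * g a := Finset.sum_le_sum fun a _ => mul_le_mul_of_nonneg_left (hc a) (hπ.1 s a)

theorem isPolicy.Pmat_nonneg (hπ : isPolicy π) (hP : ∀ s a s', 0 ≤ P s a s') (s s' : S) :
    0 ≤ Pmat P π s s' :=
  Finset.sum_nonneg fun a _ => mul_nonneg (hP s a s') (hπ.1 s a)

variable [Fintype S]

theorem isPolicy.sum_Pmat_le_one (hπ : isPolicy π) (hPsum : ∀ s a, ∑ s', P s a s' ≤ 1) (s : S) :
    ∑ s', Pmat P π s s' ≤ 1 := calc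
  ∑ s', Pmat P π s s' = ∑ a, (∑ s', P s a s') * π s a := by
    simp only [Pmat, of_apply, Finset.sum_mul]
    exact Finset.sum_comm
  _ ≤ ∑ a, π s a :=
    Finset.sum_le_sum fun a _ => mul_le_of_le_one_left (hπ.1 s a) (hPsum s a)
  _ = 1 := hπ.2 s

theorem detPol_dotProduct_posPart_eq_zero [DecidableEq A] {p : S → A} {g : S × A → ℝ}
    (hg : ∀ s, g (s, p s) ≤ 0) : Function.uncurry (detPol p) ⬝ᵥ g⁺ = 0 := by
  refine Finset.sum_eq_zero fun ⟨s, a⟩ _ => ?_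
  rw [Pi.posPart_apply]
  by_cases ha : a = p s
  · rw [ha, posPart_of_nonpos (hg s), mul_zero]
  · simp [detPol, ha]

end Policy

section Objective

variable {S A K : Type*} [Fintype S] [Fintype A] [Fintype K]

/-- Objective `αᵀΦx - πᵀλ` of the bilinear program. -/
def objective (α : S → ℝ) (Φ : Matrix S K ℝ) (t : (S → A → ℝ) × (K → ℝ) × (S × A → ℝ)) : ℝ :=
  α ⬝ᵥ (Φ *ᵥ t.2.1) - Function.uncurry t.1 ⬝ᵥ t.2.2

theorem objective_eq_transpose_mulVec {α : S → ℝ} {Φ : Matrix S K ℝ}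
    (t : (S → A → ℝ) × (K → ℝ) × (S × A → ℝ)) :
    objective α Φ t = (Φᵀ *ᵥ α) ⬝ᵥ t.2.1 - Function.uncurry t.1 ⬝ᵥ t.2.2 := by
  rw [objective, dotProduct_mulVec, mulVec_transpose]

end Objective

variable {S A K : Type*} [Fintype S] [DecidableEq S]

section Residual

variable {P : S → A → S → ℝ} {r : S → A → ℝ} {γ : ℝ}

/-- The Bellman residual `Av - b` of `v`. -/
def residual (P : S → A → S → ℝ) (r : S → A → ℝ) (γ : ℝ) (v : S → ℝ) : S × A → ℝ :=
  Amat P γ *ᵥ v - bvec r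

theorem residual_apply (v : S → ℝ) (s : S) (a : A) :
    residual P r γ v (s, a) = v s - (r s a + γ * ∑ s', P s a s' * v s') := by
  simp only [residual, Amat, bvec, mulVec, dotProduct, Pi.sub_apply, of_apply, sub_mul,
    Finset.sum_sub_distrib, ite_mul, one_mul, zero_mul, Finset.sum_ite_eq, Finset.mem_univ,
    if_true, Finset.mul_sum, mul_assoc]
  ring

theorem isGreedy.residual_le {p : S → A} {v : S → ℝ} (hp : isGreedy P r γ p v) (s : S) (a : A) :
    residual P r γ v (s, p s) ≤ residual P r γ v (s, a) := by
  simp only [residual_apply]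
  exact sub_le_sub_left (hp s a) _

theorem residual_sub_const_le (hPsum : ∀ s a, ∑ s', P s a s' ≤ 1) (hγ0 : 0 ≤ γ) (v : S → ℝ)
    {c : ℝ} (hc : 0 ≤ c) (w : S × A) :
    residual P r γ (v - fun _ => c) w ≤ residual P r γ v w - (1 - γ) * c := by
  obtain ⟨s, a⟩ := w
  have hmass : γ * (∑ s', P s a s') * c ≤ γ * c :=
    mul_le_mul_of_nonneg_right (mul_le_of_le_one_right hγ0 (hPsum s a)) hc
  simp only [residual_apply, Pi.sub_apply, mul_sub, Finset.sum_sub_distrib, ← Finset.sum_mul]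
  linarith

/-- The pairs `(x, λ)` feasible for the bilinear program. This region does not involve the policy,
so that for a fixed policy the program is linear. -/
def multiplierSet [Fintype K] (P : S → A → S → ℝ) (r : S → A → ℝ) (γ : ℝ) (Φ : Matrix S K ℝ) :
    Set ((K → ℝ) × (S × A → ℝ)) :=
  {z | 0 ≤ z.2 ∧ residual P r γ (Φ *ᵥ z.1) ≤ (1 - γ) • z.2}

/-- The constraint matrix `AΦ/(1-γ)` of the linear program obtained by fixing the policy; with this
scaling its dual variables are exactly the pairs `(x, λ)` of the bilinear program. -/
noncomputable def scaledAmat (P : S → A → S → ℝ) (γ : ℝ) (Φ : Matrix S K ℝ) :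
    Matrix (S × A) K ℝ :=
  (1 - γ)⁻¹ • (Amat P γ * Φ)

/-- The cost vector `b/(1-γ)` that goes with `scaledAmat`. -/
noncomputable def scaledBvec (r : S → A → ℝ) (γ : ℝ) : S × A → ℝ :=
  (1 - γ)⁻¹ • bvec r

theorem inv_smul_residual_eq [Fintype K] (Φ : Matrix S K ℝ) (x : K → ℝ) :
    (1 - γ)⁻¹ • residual P r γ (Φ *ᵥ x) = scaledAmat P γ Φ *ᵥ x - scaledBvec r γ := by
  rw [residual, scaledAmat, scaledBvec, smul_sub, smul_mulVec, mulVec_mulVec]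

theorem multiplierSet_eq_boxDual [Fintype K] (hγ1 : γ < 1) (Φ : Matrix S K ℝ) :
    multiplierSet P r γ Φ = boxDual (scaledAmat P γ Φ) (scaledBvec r γ) := by
  ext z
  rw [multiplierSet, Set.mem_ofPred_eq, ← inv_smul_le_iff_of_pos (sub_pos.2 hγ1),
    inv_smul_residual_eq]
  rfl

end Residual

variable [Fintype A]

theorem transpose_Amat_mulVec_occupancy {π : S → A → ℝ} (hπ : isPolicy π) (P : S → A → S → ℝ)
    (γ : ℝ) (d : S → ℝ) :
    (Amat P γ)ᵀ *ᵥ (fun w => d w.1 * π w.1 w.2) = d - γ • (d ᵥ* Pmat P π) := by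
  ext s'
  have hout : ∑ s, ∑ a, (if s = s' then (1 : ℝ) else 0) * (d s * π s a) = d s' := by
    simp only [← Finset.mul_sum, hπ.2, mul_one]
    simp only [ite_mul, one_mul, zero_mul, Fintype.sum_ite_eq']
  have hin : ∑ s, ∑ a, γ * P s a s' * (d s * π s a) = γ * (d ᵥ* Pmat P π) s' := by
    simp only [vecMul, dotProduct, Pmat, of_apply, Finset.mul_sum]
    exact Finset.sum_congr rfl fun s _ => Finset.sum_congr rfl fun a _ => by ring
  simp only [mulVec, dotProduct, transpose_apply, Amat, of_apply, sub_mul,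
    Finset.sum_sub_distrib, Fintype.sum_prod_type, hout, hin, Pi.sub_apply, Pi.smul_apply,
    smul_eq_mul]

variable {P : S → A → S → ℝ} {α : S → ℝ} {γ : ℝ}

theorem Utilde_nonempty {π : S → A → ℝ} (hπ : isPolicy π) (hP : ∀ s a s', 0 ≤ P s a s')
    (hPsum : ∀ s a, ∑ s', P s a s' ≤ 1) (hα : ∀ s, 0 ≤ α s) (hαsum : ∑ s, α s ≤ 1)
    (hγ0 : 0 ≤ γ) (hγ1 : γ < 1) (Φ : Matrix S K ℝ) : (Utilde P α γ Φ π).Nonempty := by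
  obtain ⟨d, ⟨hd0, hd1⟩, hd⟩ := exists_discounted_occupancy (hπ.Pmat_nonneg hP)
    (hπ.sum_Pmat_le_one hPsum) hα hαsum hγ0 hγ1
  refine ⟨fun w => d w.1 * π w.1 w.2, fun w => mul_nonneg (hd0 w.1) (hπ.1 w.1 w.2), ?_,
    fun w => mul_le_of_le_one_left (hπ.1 w.1 w.2) (hd1 w.1)⟩
  rw [transpose_Amat_mulVec_occupancy hπ, hd, mulVec_smul]
  rfl

section RobustReturn

variable {r : S → A → ℝ} {Φ : Matrix S K ℝ} {π : S → A → ℝ}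

theorem Utilde_eq_boxPrimal (hγ1 : γ < 1) : Utilde P α γ Φ π =
    boxPrimal (scaledAmat P γ Φ) (Function.uncurry π) (Φᵀ *ᵥ α) := by
  ext u
  have hflow : (scaledAmat P γ Φ)ᵀ *ᵥ u = Φᵀ *ᵥ α ↔
      Φᵀ *ᵥ ((Amat P γ)ᵀ *ᵥ u) = (1 - γ) • (Φᵀ *ᵥ α) := by
    rw [scaledAmat, transpose_smul, transpose_mul, smul_mulVec, ← mulVec_mulVec,
      inv_smul_eq_iff₀ (sub_pos.2 hγ1).ne']
  exact ⟨fun hu => ⟨⟨hu.1, hu.2.2⟩, hflow.2 hu.2.1⟩, fun hu => ⟨hu.1.1, hflow.1 hu.2, hu.1.2⟩⟩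

variable [Fintype K]

theorem rhoTilde_eq_of_isLeast (hγ1 : γ < 1) {m : ℝ}
    (hm : IsLeast ((scaledBvec r γ ⬝ᵥ ·) '' Utilde P α γ Φ π) m) :
    rhoTilde P r α γ Φ π = m := by
  have hvalue (x : K → ℝ) (u : S × A → ℝ) :
      (∑ w, u w * ((Amat P γ *ᵥ (Φ *ᵥ x)) w - bvec r w)) / (1 - γ) =
        u ⬝ᵥ (scaledAmat P γ Φ *ᵥ x - scaledBvec r γ) := by
    rw [← inv_smul_residual_eq, dotProduct_smul, smul_eq_mul, ← div_eq_inv_mul]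
    rfl
  have hpairing (x : K → ℝ) : ∑ s, α s * (Φ *ᵥ x) s = (Φᵀ *ᵥ α) ⬝ᵥ x := by
    rw [mulVec_transpose, ← dotProduct_mulVec]
    rfl
  rw [Utilde_eq_boxPrimal hγ1] at hm
  simp only [rhoTilde, hvalue, hpairing, Utilde_eq_boxPrimal hγ1]
  exact iSup_sub_sSup_boxPrimal_eq hm

theorem isLUB_objective_rhoTilde (hγ1 : γ < 1) (hne : (Utilde P α γ Φ π).Nonempty)
    (r : S → A → ℝ) :
    IsLUB ((fun z => objective α Φ (π, z)) '' multiplierSet P r γ Φ) (rhoTilde P r α γ Φ π) := by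
  rw [Utilde_eq_boxPrimal hγ1] at hne
  obtain ⟨m, hm⟩ := exists_isLeast_boxPrimal (scaledBvec r γ) hne
  rw [rhoTilde_eq_of_isLeast hγ1 (by rwa [Utilde_eq_boxPrimal hγ1]),
    multiplierSet_eq_boxDual hγ1]
  simp only [objective_eq_transpose_mulVec]
  exact isLUB_boxDual_value hm

/-- Feasible set of the bilinear program. -/
def feasibleSet (P : S → A → S → ℝ) (r : S → A → ℝ) (γ : ℝ) (Φ : Matrix S K ℝ) :
    Set ((S → A → ℝ) × (K → ℝ) × (S × A → ℝ)) :=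
  {π | isPolicy π} ×ˢ multiplierSet P r γ Φ

theorem isLUB_objective_iff_isLUB_rhoTilde (hγ1 : γ < 1)
    (hne : ∀ π : S → A → ℝ, isPolicy π → (Utilde P α γ Φ π).Nonempty) (r : S → A → ℝ) (c : ℝ) :
    IsLUB (objective α Φ '' feasibleSet P r γ Φ) c ↔
      IsLUB (rhoTilde P r α γ Φ '' {π | isPolicy π}) c := by
  have hslices : objective α Φ '' feasibleSet P r γ Φ =
      ⋃ π : {π : S → A → ℝ // isPolicy π},
        (fun z => objective α Φ (π.1, z)) '' multiplierSet P r γ Φ := by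
    ext y
    simp [feasibleSet, and_assoc]
  have hslice (π : {π : S → A → ℝ // isPolicy π}) :
      IsLUB ((fun z => objective α Φ (π.1, z)) '' multiplierSet P r γ Φ)
        (rhoTilde P r α γ Φ π.1) :=
    isLUB_objective_rhoTilde hγ1 (hne π.1 π.2) r
  have hrange : rhoTilde P r α γ Φ '' {π | isPolicy π} =
      Set.range fun π : {π : S → A → ℝ // isPolicy π} => rhoTilde P r α γ Φ π.1 :=
    Set.image_eq_range _ _
  rw [hslices, hrange]
  exact (isLUB_iUnion_iff_of_isLUB hslice c).symm

end RobustReturn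

section GreedyImprovement

variable {r : S → A → ℝ}

theorem residual_sub_penalty_nonpos {π : S → A → ℝ} (hπ : isPolicy π)
    (hPsum : ∀ s a, ∑ s', P s a s' ≤ 1) (hγ0 : 0 ≤ γ) (hγ1 : γ < 1) {v : S → ℝ}
    {l : S × A → ℝ} (hl : 0 ≤ l) (hv : residual P r γ v ≤ (1 - γ) • l) {p : S → A}
    (hp : isGreedy P r γ p (v - fun _ => Function.uncurry π ⬝ᵥ l)) (s : S) :
    residual P r γ (v - fun _ => Function.uncurry π ⬝ᵥ l) (s, p s) ≤ 0 := by
  set c := Function.uncurry π ⬝ᵥ l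
  have hterm (s : S) (a : A) : 0 ≤ π s a * l (s, a) := mul_nonneg (hπ.1 s a) (hl (s, a))
  have hstate (s : S) : 0 ≤ ∑ a, π s a * l (s, a) := Finset.sum_nonneg fun a _ => hterm s a
  have hcsum : c = ∑ s, ∑ a, π s a * l (s, a) := Fintype.sum_prod_type _
  have hc0 : 0 ≤ c := hcsum ▸ Finset.sum_nonneg fun s _ => hstate s
  have hsc : ∑ a, π s a * l (s, a) ≤ c :=
    hcsum ▸ Finset.single_le_sum (fun s _ => hstate s) (Finset.mem_univ s)
  have hbound (a : A) :
      residual P r γ (v - fun _ => c) (s, p s) / (1 - γ) + c ≤ l (s, a) := by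
    rw [← le_sub_iff_add_le, div_le_iff₀ (sub_pos.2 hγ1)]
    have hva : residual P r γ v (s, a) ≤ (1 - γ) * l (s, a) := hv (s, a)
    linarith [hp.residual_le s a, residual_sub_const_le (r := r) hPsum hγ0 v hc0 (s, a)]
  have haverage := (hπ.le_sum_mul s hbound).trans hsc
  have hscaled : residual P r γ (v - fun _ => c) (s, p s) / (1 - γ) ≤ 0 := by linarith
  rwa [div_le_iff₀ (sub_pos.2 hγ1), zero_mul] at hscaled

variable [Fintype K] [DecidableEq A] {Φ : Matrix S K ℝ}

theorem detPol_mem_feasibleSet (hγ1 : γ < 1) (p : S → A) (x : K → ℝ) :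
    (detPol p, x, ((1 - γ)⁻¹ • residual P r γ (Φ *ᵥ x))⁺) ∈ feasibleSet P r γ Φ :=
  ⟨isPolicy_detPol p, posPart_nonneg _,
    (inv_smul_le_iff_of_pos (sub_pos.2 hγ1)).1 (le_posPart _)⟩

theorem exists_greedy_feasible_objective_ge (hPsum : ∀ s a, ∑ s', P s a s' ≤ 1)
    (hαsum : ∑ s, α s ≤ 1) (hγ0 : 0 ≤ γ) (hγ1 : γ < 1)
    (hΦ : ∃ x : K → ℝ, Φ *ᵥ x = fun _ => (1 : ℝ))
    {t : (S → A → ℝ) × (K → ℝ) × (S × A → ℝ)} (ht : t ∈ feasibleSet P r γ Φ) :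
    ∃ t' ∈ feasibleSet P r γ Φ, objective α Φ t ≤ objective α Φ t' ∧
      (∃ p : S → A, t'.1 = detPol p ∧ isGreedy P r γ p (Φ *ᵥ t'.2.1)) ∧
      Function.uncurry t'.1 ⬝ᵥ t'.2.2 = 0 := by
  obtain ⟨π, x, l⟩ := t
  obtain ⟨hπ, hl, hx⟩ := ht
  obtain ⟨e, he⟩ := hΦ
  let c := Function.uncurry π ⬝ᵥ l
  have hc : 0 ≤ c := dotProduct_nonneg_of_nonneg (fun w => hπ.1 w.1 w.2) hl
  have hshift : Φ *ᵥ (x - c • e) = Φ *ᵥ x - fun _ => c := by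
    ext s
    simp [mulVec_sub, mulVec_smul, he]
  obtain ⟨p, hp⟩ := exists_isGreedy hπ.nonempty_action P r γ (Φ *ᵥ (x - c • e))
  have hnonpos (s : S) : residual P r γ (Φ *ᵥ (x - c • e)) (s, p s) ≤ 0 := by
    rw [hshift] at hp ⊢
    exact residual_sub_penalty_nonpos hπ hPsum hγ0 hγ1 hl hx hp s
  let g := (1 - γ)⁻¹ • residual P r γ (Φ *ᵥ (x - c • e))
  have hslack : Function.uncurry (detPol p) ⬝ᵥ g⁺ = 0 := detPol_dotProduct_posPart_eq_zero fun s =>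
    smul_nonpos_of_nonneg_of_nonpos (inv_nonneg.2 (sub_pos.2 hγ1).le) (hnonpos s)
  refine ⟨(detPol p, x - c • e, g⁺), detPol_mem_feasibleSet hγ1 p (x - c • e), ?_,
    ⟨p, rfl, hp⟩, hslack⟩
  calc α ⬝ᵥ (Φ *ᵥ x) - c ≤ α ⬝ᵥ (Φ *ᵥ x) - (∑ s, α s) * c :=
        sub_le_sub_left (mul_le_of_le_one_left hc hαsum) _
    _ = α ⬝ᵥ (Φ *ᵥ (x - c • e)) := by
        rw [hshift, dotProduct_sub, Finset.sum_mul]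
        rfl
    _ = α ⬝ᵥ (Φ *ᵥ (x - c • e)) - Function.uncurry (detPol p) ⬝ᵥ g⁺ :=
        (sub_eq_self.2 hslack).symm

end GreedyImprovement

end DRADP

theorem bilinear_program_correct_general {S A K : Type*} [Fintype S] [Fintype A] [Fintype K]
    [DecidableEq S] [DecidableEq A]
    (P : S → A → S → ℝ) (r : S → A → ℝ) (α : S → ℝ) (γ : ℝ) (Φ : Matrix S K ℝ)
    (hP : ∀ s a s', 0 ≤ P s a s') (hPsum : ∀ s a, ∑ s', P s a s' ≤ 1)
    (hα : ∀ s, 0 ≤ α s) (hαsum : ∑ s, α s ≤ 1) (hγ0 : 0 ≤ γ) (hγ1 : γ < 1) :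
    sSup (objective α Φ '' feasibleSet P r γ Φ) =
      sSup (rhoTilde P r α γ Φ '' {π | isPolicy π}) ∧
    ((∃ t ∈ feasibleSet P r γ Φ, ∀ t' ∈ feasibleSet P r γ Φ, objective α Φ t' ≤ objective α Φ t) →
      (∃ x : K → ℝ, Φ *ᵥ x = fun _ => (1 : ℝ)) →
      ∃ t ∈ feasibleSet P r γ Φ,
        (∀ t' ∈ feasibleSet P r γ Φ, objective α Φ t' ≤ objective α Φ t) ∧
        (∃ p : S → A, t.1 = detPol p ∧ isGreedy P r γ p (Φ *ᵥ t.2.1)) ∧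
        Function.uncurry t.1 ⬝ᵥ t.2.2 = 0) := by
  refine ⟨csSup_eq_of_isLUB_iff (isLUB_objective_iff_isLUB_rhoTilde hγ1
    (fun _ hπ => Utilde_nonempty hπ hP hPsum hα hαsum hγ0 hγ1 Φ) r), ?_⟩
  rintro ⟨t, ht, hmax⟩ hΦ
  obtain ⟨t', ht', hle, hgreedy, hslack⟩ :=
    exists_greedy_feasible_objective_ge hPsum hαsum hγ0 hγ1 hΦ ht
  exact ⟨t', ht', fun t'' ht'' => (hmax t'' ht'').trans hle, hgreedy, hslack⟩

/-- the bilinear program maximizing `f(π,x,λ) = αᵀΦx − πᵀλ` over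
feasible `(π,x,λ)` has optimal value `sup_{π∈Π_R} ρ̃(π)`, and if the supremum is
attained then it is attained at a deterministic policy greedy w.r.t. `Φx̄` with
complementary slackness `π̄ᵀλ̄ = 0`. -/
theorem bilinear_program_correct {S A K : Type*} [Fintype S] [Fintype A] [Fintype K]
    [DecidableEq S] [DecidableEq A]
    (P : S → A → S → ℝ) (r : S → A → ℝ) (α : S → ℝ) (γ : ℝ) (Φ : Matrix S K ℝ)
    (hP : ∀ s a s', 0 ≤ P s a s') (hPsum : ∀ s a, ∑ s', P s a s' = 1)
    (hα : ∀ s, 0 ≤ α s) (hαsum : ∑ s, α s = 1)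
    (hγ0 : 0 ≤ γ) (hγ1 : γ < 1)
    (Feas : Set ((S → A → ℝ) × (K → ℝ) × (S × A → ℝ)))
    (hFeas : Feas = {t | isPolicy t.1 ∧ (∀ w, 0 ≤ t.2.2 w) ∧
      ∀ w : S × A, (Amat P γ *ᵥ (Φ *ᵥ t.2.1)) w - bvec r w ≤ (1 - γ) * t.2.2 w})
    (f : (S → A → ℝ) × (K → ℝ) × (S × A → ℝ) → ℝ)
    (hf : f = fun t => ∑ s, α s * (Φ *ᵥ t.2.1) s - ∑ w : S × A, t.1 w.1 w.2 * t.2.2 w) :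
    sSup (f '' Feas) = sSup (rhoTilde P r α γ Φ '' {π | isPolicy π}) ∧
    ((∃ t ∈ Feas, ∀ t' ∈ Feas, f t' ≤ f t) →
      (∃ x : K → ℝ, Φ *ᵥ x = fun _ => (1 : ℝ)) →
      ∃ t ∈ Feas, (∀ t' ∈ Feas, f t' ≤ f t) ∧
        (∃ p : S → A, t.1 = detPol p ∧ isGreedy P r γ p (Φ *ᵥ t.2.1)) ∧
        ∑ w : S × A, t.1 w.1 w.2 * t.2.2 w = 0) := by
  subst hFeas hf
  exact bilinear_program_correct_general P r α γ Φ hP (fun s a => (hPsum s a).le) hα hαsum.le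
    hγ0 hγ1
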